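/- High-minrank subspace of quadrics in a high q-rank cubic: let V be a finite-dimensional k-vector space and suppose the cubic form f on V has q-rank r and admits an expression f(v) = Σ_{i=1}^n ℓᵢ(v)·qᵢ(v) with ℓᵢ linear functionals and qᵢ quadratic forms on V; let Q be the linear span of q₁,…,q_n. Let a and s be positive integers satisfying (2^a − 1)(s − 1) + a ≤ r. Then there exists an a-dimensional linear subspace Q' ⊆ Q such that every nonzero element of Q' has rank at least s. -/

import Mathlib

open scoped BigOperators

/-- The q-rank of a function `f : V → k`: the least `r` such that
`f = ∑ ℓᵢ · qᵢ` with `ℓᵢ` linear functionals and `qᵢ` quadratic forms on `V`,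
as an element of `ℕ∞` (`⊤` if no such expression exists). -/
noncomputable def qrank (k : Type*) [Field k] {V : Type*} [AddCommGroup V] [Module k V]
    (f : V → k) : ℕ∞ :=
  sInf {r : ℕ∞ | ∃ m : ℕ, r = m ∧
    ∃ (ℓ : Fin m → (V →ₗ[k] k)) (q : Fin m → QuadraticForm k V),
      ∀ v, f v = ∑ i, ℓ i v * q i v}

/-- `f : V → k` is a cubic form: `f v = T (v,v,v)` for a symmetric trilinear map `T`. -/
def IsCubicForm (k : Type*) [Field k] {V : Type*} [AddCommGroup V] [Module k V]
    (f : V → k) : Prop :=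
  ∃ T : V →ₗ[k] V →ₗ[k] V →ₗ[k] k,
    (∀ x y z, T x y z = T y x z) ∧ (∀ x y z, T x y z = T x z y) ∧ ∀ v, f v = T v v v

/-- The rank of a quadratic form: `dim V` minus the dimension of its radical
(the kernel of the polar bilinear form). -/
noncomputable def quadRank {k V : Type*} [Field k] [AddCommGroup V] [Module k V]
    (q : QuadraticForm k V) : ℕ :=
  Module.finrank k V - Module.finrank k (LinearMap.ker (QuadraticMap.polarBilin q))

/-!
Let `L` be the span of the elements of rank at most `t = s - 1` in the span `Q` of the `qᵢ`.

If some element of `L` has rank above `(2 ^ a - 1) * t`, then, since `L` is spanned by elements of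
rank at most `t`, every window of `t` consecutive ranks below that bound is hit by an element of
`L`. Elements `x₁, …, xₐ` with `(2 ^ i - 1) * t < rank xᵢ ≤ 2 ^ i * t` then span the required
space: the rank of `xᵢ` exceeds by more than `t` that of any combination of its predecessors.

Otherwise an element of maximal rank in `L` has a radical of codimension at most `(2 ^ a - 1) * t`
on which all of `L` vanishes, so `L` lies in an ideal generated by that many linear forms. Hence
a complement of `L` in `Q` has dimension at least `r - (2 ^ a - 1) * t ≥ a`, and it contains no
nonzero element of rank at most `t`.
-/

section LinearMap

variable {k : Type*} [Field k] {E F : Type*} [AddCommGroup E] [Module k E]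
  [AddCommGroup F] [Module k F]

lemma exists_submodule_le_finrank_eq (D : Submodule k E) {a : ℕ} (ha : a ≤ Module.finrank k D) :
    ∃ D' ≤ D, Module.finrank k D' = a := by
  obtain ⟨v, hv⟩ := exists_linearIndependent_of_le_finrank ha
  refine ⟨(Submodule.span k (Set.range v)).map D.subtype, Submodule.map_subtype_le _ _, ?_⟩
  rw [Submodule.finrank_map_subtype_eq, finrank_span_eq_card hv, Fintype.card_fin]

lemma finrank_sup_span_singleton_of_notMem {D : Submodule k E} [FiniteDimensional k D] {x : E}
    (hx : x ∉ D) : Module.finrank k ↥(D ⊔ Submodule.span k {x}) = Module.finrank k D + 1 := by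
  have hx0 : x ≠ 0 := fun h ↦ hx (h ▸ D.zero_mem)
  have hdisj : Disjoint D (Submodule.span k {x}) := (Submodule.disjoint_span_singleton' hx0).2 hx
  have hdim := Submodule.finrank_sup_add_finrank_inf_eq D (Submodule.span k {x})
  rwa [hdisj.eq_bot, finrank_bot, add_zero, finrank_span_singleton hx0] at hdim

lemma exists_fun_fin_finrank_span_range_eq (D : Submodule k E) [FiniteDimensional k D] :
    ∃ e : Fin (Module.finrank k D) → E, Submodule.span k (Set.range e) = D := by
  let b := Module.finBasis k D
  refine ⟨D.subtype ∘ b, ?_⟩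
  rw [Set.range_comp, ← Submodule.map_span, b.span_eq, Submodule.map_subtype_top]

lemma injective_coprod_toSpanSingleton {A : E →ₗ[k] F} (hA : Function.Injective A) {y : F}
    (hy : y ∉ A.range) : Function.Injective (A.coprod (LinearMap.toSpanSingleton k F y)) := by
  have hy0 : y ≠ 0 := fun h ↦ hy (h ▸ A.range.zero_mem)
  have hdisj : Disjoint A.range (LinearMap.toSpanSingleton k F y).range := by
    rw [LinearMap.range_toSpanSingleton]
    exact (Submodule.disjoint_span_singleton' hy0).2 hy
  rw [← LinearMap.ker_eq_bot, LinearMap.ker_coprod_of_disjoint_range _ _ hdisj,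
    LinearMap.ker_eq_bot.2 hA, LinearMap.ker_toSpanSingleton k hy0, Submodule.prod_bot]

variable [Infinite k] [FiniteDimensional k E]

lemma exists_ne_zero_injective_add_smul (A B : E →ₗ[k] F) (hA : Function.Injective A) :
    ∃ c : k, c ≠ 0 ∧ Function.Injective (A + c • B) := by
  obtain ⟨G, hG⟩ := A.exists_leftInverse_of_injective (LinearMap.ker_eq_bot.2 hA)
  obtain ⟨μ, hμ⟩ := ((Module.End.finite_hasEigenvalue (G ∘ₗ B)).insert 0).exists_notMem
  obtain ⟨hμ0, hμ_eigen⟩ := not_or.1 hμ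
  refine ⟨-μ⁻¹, by simpa using hμ0, ?_⟩
  rw [← LinearMap.ker_eq_bot, LinearMap.ker_eq_bot']
  intro x hx
  by_contra hx0
  refine hμ_eigen (Module.End.hasEigenvalue_of_hasEigenvector (x := x) ⟨?_, hx0⟩)
  have hGA : G (A x) = x := LinearMap.congr_fun hG x
  have hGx : x - μ⁻¹ • G (B x) = 0 := by
    simpa [hGA, sub_eq_add_neg] using congrArg G hx
  rw [Module.End.mem_eigenspace_iff, LinearMap.comp_apply]
  exact ((eq_inv_smul_iff₀ hμ0).1 (sub_eq_zero.1 hGx)).symm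

lemma map_ker_le_range_of_finrank_range_add_smul_le (A B : E →ₗ[k] F)
    (hmax : ∀ c : k, Module.finrank k (A + c • B).range ≤ Module.finrank k A.range) :
    A.ker.map B ≤ A.range := by
  rintro _ ⟨w, hw, rfl⟩
  by_contra hBw
  have hAw : A w = 0 := hw
  obtain ⟨U, hU⟩ := Submodule.exists_isCompl A.ker
  have hAU : Function.Injective (A.domRestrict U) :=
    LinearMap.injective_domRestrict_iff.2 hU.symm.disjoint
  have hBwU : B w ∉ (A.domRestrict U).range := fun ⟨u, hu⟩ ↦ hBw ⟨u, hu⟩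
  let A' : (U × k) →ₗ[k] F := (A.domRestrict U).coprod (LinearMap.toSpanSingleton k F (B w))
  let B' : (U × k) →ₗ[k] F := B.domRestrict U ∘ₗ LinearMap.fst k U k
  obtain ⟨c, hc, hinj⟩ := exists_ne_zero_injective_add_smul A' B'
    (injective_coprod_toSpanSingleton hAU hBwU)
  have hle : (A' + c • B').range ≤ (A + c • B).range := by
    rintro _ ⟨⟨u, t⟩, rfl⟩
    refine ⟨u + (c⁻¹ * t) • w, ?_⟩
    calc (A + c • B) (u + (c⁻¹ * t) • w) = A u + c • B u + (c * (c⁻¹ * t)) • B w := by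
          simp [hAw, smul_smul, add_assoc]
      _ = A u + t • B w + c • B u := by rw [mul_inv_cancel_left₀ hc, add_right_comm]
  have hdim := Submodule.finrank_mono hle
  rw [LinearMap.finrank_range_of_inj hinj, Module.finrank_prod, Module.finrank_self] at hdim
  have := hmax c
  have := Submodule.finrank_add_eq_of_isCompl hU
  have := A.finrank_range_add_finrank_ker
  omega

end LinearMap

section RankFunction

/-- A rank-like function on a vector space: homogeneous and subadditive, with values in `ℕ`.
Homogeneity is encoded by an inequality for all scalars; for a nonzero scalar it is an equality. -/
structure IsRankFunction (k : Type*) [Field k] {E : Type*} [AddCommGroup E] [Module k E]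
    (ρ : E → ℕ) : Prop where
  map_zero : ρ 0 = 0
  map_smul_le : ∀ (c : k) (x : E), ρ (c • x) ≤ ρ x
  map_add_le : ∀ x y : E, ρ (x + y) ≤ ρ x + ρ y

variable {k : Type*} [Field k] {E : Type*} [AddCommGroup E] [Module k E] {ρ : E → ℕ}

namespace IsRankFunction

lemma le_map_smul (hρ : IsRankFunction k ρ) {c : k} (hc : c ≠ 0) (x : E) : ρ x ≤ ρ (c • x) := by
  simpa only [inv_smul_smul₀ hc] using hρ.map_smul_le c⁻¹ (c • x)

lemma le_map_add_smul_add (hρ : IsRankFunction k ρ) {c : k} (hc : c ≠ 0) (x y : E) :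
    ρ x ≤ ρ (y + c • x) + ρ y :=
  calc ρ x ≤ ρ (c • x) := hρ.le_map_smul hc x
    _ = ρ (y + c • x + (-1 : k) • y) := by congr 1; module
    _ ≤ ρ (y + c • x) + ρ ((-1 : k) • y) := hρ.map_add_le _ _
    _ ≤ ρ (y + c • x) + ρ y := by gcongr; exact hρ.map_smul_le _ _

-- Adding the generators of `z` one at a time raises `ρ` by at most `t` per step.
lemma exists_mem_span_lt_add_and_le (hρ : IsRankFunction k ρ) {S : Set E} {t T : ℕ}
    (hS : ∀ x ∈ S, ρ x ≤ t) {z : E} (hz : z ∈ Submodule.span k S) (hT : T < ρ z + t) :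
    ∃ x ∈ Submodule.span k S, T < ρ x + t ∧ ρ x ≤ T := by
  by_contra! hgap
  have htT : t ≤ T := by
    by_contra! hlt
    simpa [hρ.map_zero] using hgap 0 (zero_mem _) (by omega)
  suffices hstep : ∀ x ∈ Submodule.span k S, ρ x + t ≤ T → ρ (x + z) + t ≤ T by
    have := hstep 0 (zero_mem _) (by rwa [hρ.map_zero, zero_add])
    rw [zero_add] at this
    omega
  clear hT
  induction hz using Submodule.closure_induction with
  | zero => simp
  | add y y' hy _ ih ih' =>
    intro x hx hxT
    rw [← add_assoc]
    exact ih' _ (add_mem hx hy) (ih x hx hxT)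
  | smul_mem c y hy =>
    intro x hx hxT
    have hmem : x + c • y ∈ Submodule.span k S :=
      add_mem hx (Submodule.smul_mem _ c (Submodule.subset_span hy))
    have hle : ρ (x + c • y) ≤ T :=
      calc ρ (x + c • y) ≤ ρ x + ρ (c • y) := hρ.map_add_le _ _
        _ ≤ ρ x + t := by gcongr; exact (hρ.map_smul_le c y).trans (hS y hy)
        _ ≤ T := hxT
    by_contra! hlt
    exact (hgap _ hmem hlt).not_ge hle

lemma exists_submodule_le_span_forall_lt (hρ : IsRankFunction k ρ) {S : Set E} {t : ℕ}
    (hS : ∀ x ∈ S, ρ x ≤ t) {z : E} (hz : z ∈ Submodule.span k S) {a : ℕ}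
    (ha : 2 ^ a * t < ρ z + t) :
    ∃ D ≤ Submodule.span k S, FiniteDimensional k D ∧ Module.finrank k D = a ∧
      (∀ p ∈ D, p ≠ 0 → t < ρ p) ∧ ∀ p ∈ D, ρ p + 2 * t ≤ 2 ^ (a + 1) * t := by
  induction a with
  | zero => exact ⟨⊥, bot_le, inferInstance, by simp, by simp, by simp [hρ.map_zero]⟩
  | succ a ih =>
    obtain ⟨D, hDS, _, hdim, hlt, hle⟩ := ih <| ha.trans_le' <| by gcongr <;> omega
    obtain ⟨x, hxS, hx, hx'⟩ := hρ.exists_mem_span_lt_add_and_le hS hz ha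
    have hlt_add {y : E} (hy : y ∈ D) {c : k} (hc : c ≠ 0) : t < ρ (y + c • x) := by
      have := hρ.le_map_add_smul_add hc x y
      have := hle y hy
      omega
    have hxD : x ∉ D := fun hxD ↦ by
      have := hle x hxD
      omega
    have hmem {p : E} (hp : p ∈ D ⊔ Submodule.span k {x}) : ∃ y ∈ D, ∃ c : k, y + c • x = p := by
      simpa [Submodule.mem_sup, Submodule.mem_span_singleton] using hp
    refine ⟨D ⊔ Submodule.span k {x}, sup_le hDS (by simpa using hxS), inferInstance, ?_, ?_, ?_⟩
    · rw [finrank_sup_span_singleton_of_notMem hxD, hdim]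
    · intro p hp hp0
      obtain ⟨y, hy, c, rfl⟩ := hmem hp
      obtain rfl | hc := eq_or_ne c 0
      · rw [zero_smul, add_zero] at hp0 ⊢
        exact hlt y hy hp0
      · exact hlt_add hy hc
    · intro p hp
      obtain ⟨y, hy, c, rfl⟩ := hmem hp
      have := hρ.map_add_le y (c • x)
      have := hρ.map_smul_le c x
      have := hle y hy
      rw [pow_succ 2 (a + 1)]
      linarith

end IsRankFunction

end RankFunction

section QuadRank

variable {k : Type*} [Field k] {V : Type*} [AddCommGroup V] [Module k V]

lemma polarBilin_add (p q : QuadraticForm k V) :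
    (p + q).polarBilin = p.polarBilin + q.polarBilin :=
  LinearMap.ext₂ fun x y ↦ QuadraticMap.polar_add p q x y

lemma polarBilin_smul (c : k) (p : QuadraticForm k V) :
    (c • p).polarBilin = c • p.polarBilin :=
  LinearMap.ext₂ fun x y ↦ QuadraticMap.polar_smul p c x y

variable [FiniteDimensional k V]

lemma quadRank_eq_finrank_range (p : QuadraticForm k V) :
    quadRank p = Module.finrank k p.polarBilin.range := by
  rw [quadRank, ← p.polarBilin.finrank_range_add_finrank_ker, Nat.add_sub_cancel_right]

lemma isRankFunction_quadRank : IsRankFunction k (quadRank : QuadraticForm k V → ℕ) where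
  map_zero := by
    have : (0 : QuadraticForm k V).polarBilin = 0 := by ext; simp [QuadraticMap.polar]
    rw [quadRank_eq_finrank_range, this, LinearMap.range_zero, finrank_bot]
  map_smul_le c p := by
    rw [quadRank_eq_finrank_range, quadRank_eq_finrank_range, polarBilin_smul]
    exact Submodule.finrank_mono (LinearMap.range_smul_le_range _ _)
  map_add_le p q := by
    rw [quadRank_eq_finrank_range, quadRank_eq_finrank_range, quadRank_eq_finrank_range,
      polarBilin_add]
    exact (Submodule.finrank_mono (LinearMap.range_add_le _ _)).trans
      (Submodule.finrank_add_le_finrank_add_finrank _ _)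

variable [Infinite k]

lemma eq_zero_on_ker_polarBilin_of_quadRank_add_smul_le (h2 : (2 : k) ≠ 0)
    {p₀ p : QuadraticForm k V} (hmax : ∀ c : k, quadRank (p₀ + c • p) ≤ quadRank p₀)
    {w : V} (hw : w ∈ p₀.polarBilin.ker) : p w = 0 := by
  have hrange (c : k) : Module.finrank k (p₀.polarBilin + c • p.polarBilin).range ≤
      Module.finrank k p₀.polarBilin.range := by
    rw [← polarBilin_smul, ← polarBilin_add, ← quadRank_eq_finrank_range,
      ← quadRank_eq_finrank_range]
    exact hmax c
  obtain ⟨u, hu⟩ := map_ker_le_range_of_finrank_range_add_smul_le _ _ hrange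
    (Submodule.mem_map_of_mem hw)
  have hself : 2 * p w = 0 :=
    calc 2 * p w = p.polarBilin w w := by simp [QuadraticMap.polar_self]
      _ = p₀.polarBilin u w := by rw [hu]
      _ = p₀.polarBilin w u := QuadraticMap.polar_comm _ _ _
      _ = 0 := by rw [LinearMap.mem_ker.1 hw, LinearMap.zero_apply]
  exact (mul_eq_zero.1 hself).resolve_left h2

lemma exists_finrank_quotient_le_forall_eq_zero_of_quadRank_le (h2 : (2 : k) ≠ 0)
    {L : Submodule k (QuadraticForm k V)} {m : ℕ} (hL : ∀ p ∈ L, quadRank p ≤ m) :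
    ∃ W : Submodule k V, Module.finrank k (V ⧸ W) ≤ m ∧ ∀ p ∈ L, ∀ w ∈ W, p w = 0 := by
  have hbdd : BddAbove (quadRank '' (L : Set (QuadraticForm k V))) :=
    ⟨m, Set.forall_mem_image.2 hL⟩
  obtain ⟨p₀, hp₀, hsup⟩ := Nat.sSup_mem (L.nonempty.image quadRank) hbdd
  refine ⟨p₀.polarBilin.ker, ?_, fun p hp w hw ↦
    eq_zero_on_ker_polarBilin_of_quadRank_add_smul_le h2 (fun c ↦ ?_) hw⟩
  · rw [Submodule.finrank_quotient]
    exact hL p₀ hp₀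
  · rw [hsup]
    exact le_csSup hbdd ⟨_, L.add_mem hp₀ (L.smul_mem c hp), rfl⟩

end QuadRank

section QRank

variable {k : Type*} [Field k] {V : Type*} [AddCommGroup V] [Module k V]

lemma exists_linear_forms_forall_eq_sum_mul (W : Submodule k V) [Module.Finite k (V ⧸ W)] :
    ∃ φ : Fin (Module.finrank k (V ⧸ W)) → (V →ₗ[k] k),
      ∀ p : QuadraticForm k V, (∀ w ∈ W, p w = 0) →
        ∃ ψ : Fin (Module.finrank k (V ⧸ W)) → (V →ₗ[k] k), ∀ v, p v = ∑ j, φ j v * ψ j v := by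
  let b := Module.finBasis k (V ⧸ W)
  obtain ⟨g, hg⟩ := W.mkQ.exists_rightInverse_of_surjective W.range_mkQ
  refine ⟨fun j ↦ b.coord j ∘ₗ W.mkQ, fun p hp ↦ ?_⟩
  obtain ⟨B, rfl⟩ := LinearMap.BilinMap.toQuadraticMap_surjective p
  let π : V →ₗ[k] V := LinearMap.id - g ∘ₗ W.mkQ
  refine ⟨fun j ↦ B (g (b j)) + B.flip (g (b j)) ∘ₗ π, fun v ↦ ?_⟩
  have hπ : π v ∈ W := by
    rw [← W.ker_mkQ, LinearMap.mem_ker]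
    simpa [π, sub_eq_zero] using (LinearMap.congr_fun hg (W.mkQ v)).symm
  have hsum : g (W.mkQ v) = ∑ j, b.coord j (W.mkQ v) • g (b j) := by
    simp only [← map_smul, ← map_sum, Module.Basis.coord_apply, b.sum_repr]
  have hvan : B (π v) (π v) = 0 := hp _ hπ
  have hπv : π v = v - g (W.mkQ v) := rfl
  calc B v v = B (g (W.mkQ v)) v + B (π v) (g (W.mkQ v)) := by
        rw [hπv] at hvan ⊢
        simp only [map_sub, LinearMap.sub_apply] at hvan ⊢
        linear_combination hvan
    _ = ∑ j, b.coord j (W.mkQ v) * (B (g (b j)) v + B (π v) (g (b j))) := by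
        simp only [hsum, map_sum, map_smul, LinearMap.sum_apply, LinearMap.smul_apply,
          smul_eq_mul, mul_add, Finset.sum_add_distrib]

lemma qrank_le_card {f : V → k} {ι : Type*} [Fintype ι] (ℓ : ι → (V →ₗ[k] k))
    (q : ι → QuadraticForm k V) (hf : ∀ v, f v = ∑ i, ℓ i v * q i v) :
    qrank k f ≤ Fintype.card ι := by
  let e := (Fintype.equivFin ι).symm
  refine sInf_le ⟨Fintype.card ι, rfl, ℓ ∘ e, q ∘ e, fun v ↦ ?_⟩
  rw [hf v]
  exact (e.sum_comp fun i ↦ ℓ i v * q i v).symm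

lemma exists_qrank_eq_and_eq_sum {f : V → k} (hf : qrank k f ≠ ⊤) :
    ∃ m : ℕ, qrank k f = m ∧ ∃ (ℓ : Fin m → (V →ₗ[k] k)) (q : Fin m → QuadraticForm k V),
      ∀ v, f v = ∑ i, ℓ i v * q i v := by
  rw [qrank, ← sInf_empty] at hf
  exact csInf_mem (Set.nonempty_iff_ne_empty.2 (ne_of_apply_ne sInf hf))

lemma qrank_add_le (f g : V → k) : qrank k (f + g) ≤ qrank k f + qrank k g := by
  obtain hf | hf := eq_or_ne (qrank k f) ⊤
  · simp [hf]
  obtain hg | hg := eq_or_ne (qrank k g) ⊤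
  · simp [hg]
  obtain ⟨m, hm, ℓ, q, hexp⟩ := exists_qrank_eq_and_eq_sum hf
  obtain ⟨m', hm', ℓ', q', hexp'⟩ := exists_qrank_eq_and_eq_sum hg
  simpa [hm, hm'] using qrank_le_card (f := f + g) (Sum.elim ℓ ℓ') (Sum.elim q q')
    fun v ↦ by simp [hexp, hexp']

variable {ι : Type*} [Fintype ι] (ℓ : ι → (V →ₗ[k] k)) {q : ι → QuadraticForm k V}

lemma qrank_sum_mul_le_finrank_of_mem {D : Submodule k (QuadraticForm k V)}
    [FiniteDimensional k D] (hq : ∀ i, q i ∈ D) :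
    qrank k (fun v ↦ ∑ i, ℓ i v * q i v) ≤ Module.finrank k D := by
  obtain ⟨e, he⟩ := exists_fun_fin_finrank_span_range_eq D
  choose c hc using fun i ↦ (Submodule.mem_span_range_iff_exists_fun k).1 (he.symm ▸ hq i)
  have hle := qrank_le_card (f := fun v ↦ ∑ i, ℓ i v * q i v)
    (fun j ↦ ∑ i, c i j • ℓ i) e fun v ↦ by
      simp only [← hc, sum_apply, LinearMap.sum_apply, LinearMap.smul_apply, smul_apply,
        smul_eq_mul, Finset.mul_sum,
        Finset.sum_mul]
      rw [Finset.sum_comm]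
      exact Finset.sum_congr rfl fun j _ ↦ Finset.sum_congr rfl fun i _ ↦ by ring
  rwa [Fintype.card_fin] at hle

lemma qrank_sum_mul_le_finrank_quotient {W : Submodule k V} [Module.Finite k (V ⧸ W)]
    (hq : ∀ i, ∀ w ∈ W, q i w = 0) :
    qrank k (fun v ↦ ∑ i, ℓ i v * q i v) ≤ Module.finrank k (V ⧸ W) := by
  obtain ⟨φ, hφ⟩ := exists_linear_forms_forall_eq_sum_mul W
  choose ψ hψ using fun i ↦ hφ (q i) (hq i)
  have hle := qrank_le_card (f := fun v ↦ ∑ i, ℓ i v * q i v) φ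
    (fun j ↦ ∑ i, QuadraticMap.linMulLin (ℓ i) (ψ i j)) fun v ↦ by
      simp only [hψ, sum_apply, QuadraticMap.linMulLin_apply, Finset.mul_sum]
      rw [Finset.sum_comm]
      exact Finset.sum_congr rfl fun j _ ↦ Finset.sum_congr rfl fun i _ ↦ by ring
  rwa [Fintype.card_fin] at hle

lemma qrank_sum_mul_le_of_quadRank_le [Infinite k] [FiniteDimensional k V] (h2 : (2 : k) ≠ 0)
    {L D : Submodule k (QuadraticForm k V)} [FiniteDimensional k D] {m : ℕ}
    (hL : ∀ p ∈ L, quadRank p ≤ m) (hq : ∀ i, q i ∈ L ⊔ D) :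
    qrank k (fun v ↦ ∑ i, ℓ i v * q i v) ≤ m + Module.finrank k D := by
  obtain ⟨W, hWm, hW⟩ := exists_finrank_quotient_le_forall_eq_zero_of_quadRank_le h2 hL
  choose p hp d hd hpd using fun i ↦ Submodule.mem_sup.1 (hq i)
  calc qrank k (fun v ↦ ∑ i, ℓ i v * q i v)
      = qrank k ((fun v ↦ ∑ i, ℓ i v * p i v) + fun v ↦ ∑ i, ℓ i v * d i v) := by
        congr 1
        funext v
        simp [← hpd, mul_add, Finset.sum_add_distrib]
    _ ≤ qrank k (fun v ↦ ∑ i, ℓ i v * p i v) + qrank k (fun v ↦ ∑ i, ℓ i v * d i v) :=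
        qrank_add_le _ _
    _ ≤ Module.finrank k (V ⧸ W) + Module.finrank k D :=
        add_le_add (qrank_sum_mul_le_finrank_quotient ℓ fun i ↦ hW _ (hp i))
          (qrank_sum_mul_le_finrank_of_mem ℓ hd)
    _ ≤ m + Module.finrank k D := by gcongr

end QRank

theorem minrank_subspace_of_qrank_general {k : Type*} [Field k] [Infinite k] (h2 : (2 : k) ≠ 0)
    {V : Type*} [AddCommGroup V] [Module k V] [FiniteDimensional k V]
    {ι : Type*} [Fintype ι] (ℓ : ι → (V →ₗ[k] k)) (q : ι → QuadraticForm k V) {a t : ℕ}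
    (hineq : (((2 ^ a - 1) * t + a : ℕ) : ℕ∞) ≤ qrank k fun v ↦ ∑ i, ℓ i v * q i v) :
    ∃ Q' ≤ Submodule.span k (Set.range q), Module.finrank k Q' = a ∧
      ∀ p ∈ Q', p ≠ 0 → t < quadRank p := by
  set Q := Submodule.span k (Set.range q)
  let S : Set (QuadraticForm k V) := {p | p ∈ Q ∧ quadRank p ≤ t}
  have hSQ : Submodule.span k S ≤ Q := Submodule.span_le.2 fun p hp ↦ hp.1
  by_cases! hbig : ∃ z ∈ Submodule.span k S, 2 ^ a * t < quadRank z + t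
  · obtain ⟨z, hz, hlt⟩ := hbig
    obtain ⟨D, hDS, -, hdim, hD, -⟩ :=
      isRankFunction_quadRank.exists_submodule_le_span_forall_lt (fun p hp ↦ hp.2) hz hlt
    exact ⟨D, hDS.trans hSQ, hdim, hD⟩
  · obtain ⟨D, hdisj, hsup⟩ := IsModularLattice.exists_disjoint_and_sup_eq hSQ
    have hDQ : D ≤ Q := hsup ▸ le_sup_right
    have : FiniteDimensional k Q := .span_of_finite k (Set.finite_range q)
    have : FiniteDimensional k D := Submodule.finiteDimensional_of_le hDQ
    have hrank : ∀ p ∈ Submodule.span k S, quadRank p ≤ (2 ^ a - 1) * t := fun p hp ↦ by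
      rw [Nat.sub_mul, one_mul]
      exact Nat.le_sub_of_add_le (hbig p hp)
    have hq (i : ι) : q i ∈ Submodule.span k S ⊔ D :=
      hsup ▸ Submodule.subset_span (Set.mem_range_self i)
    have hqrank := qrank_sum_mul_le_of_quadRank_le ℓ h2 hrank hq
    have haD : a ≤ Module.finrank k D := by
      have := hineq.trans hqrank
      norm_cast at this
      omega
    obtain ⟨D', hD'D, hdim⟩ := exists_submodule_le_finrank_eq D haD
    refine ⟨D', hD'D.trans hDQ, hdim, fun p hp hp0 ↦ ?_⟩
    by_contra! hle
    have hpS : p ∈ Submodule.span k S := Submodule.subset_span ⟨hDQ (hD'D hp), hle⟩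
    exact hp0 (Submodule.disjoint_def.1 hdisj p hpS (hD'D hp))

/-- High-minrank subspace of quadrics in a high q-rank cubic: if the cubic form
`f = ∑ ℓᵢ qᵢ` has q-rank `r` and `(2^a - 1)(s - 1) + a ≤ r`, then the span of the `qᵢ`
contains an `a`-dimensional subspace all of whose nonzero elements have rank at least `s`. -/
theorem minrank_subspace_of_qrank {k : Type*} [Field k] [IsAlgClosed k]
    (h2 : (2 : k) ≠ 0) (h3 : (3 : k) ≠ 0)
    {V : Type*} [AddCommGroup V] [Module k V] [FiniteDimensional k V]
    (f : V → k) {n : ℕ} (ℓ : Fin n → (V →ₗ[k] k)) (q : Fin n → QuadraticForm k V)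
    (hexp : ∀ v, f v = ∑ i, ℓ i v * q i v)
    (r : ℕ) (hr : qrank k f = (r : ℕ∞))
    (a s : ℕ) (ha : 0 < a) (hs : 0 < s)
    (hineq : (2 ^ a - 1) * (s - 1) + a ≤ r) :
    ∃ Q' ≤ Submodule.span k (Set.range q), Module.finrank k Q' = a ∧
      ∀ p ∈ Q', p ≠ 0 → s ≤ quadRank p := by
  obtain ⟨Q', hle, hdim, hrank⟩ := minrank_subspace_of_qrank_general h2 ℓ q (a := a) (t := s - 1)
    (by rw [← funext hexp, hr]; exact_mod_cast hineq)
  exact ⟨Q', hle, hdim, fun p hp hp0 ↦ Nat.le_of_pred_lt (hrank p hp hp0)⟩
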